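/- arXiv:1312.2185 — 3 statements merged into one kernel-verified Lean document; each statement's English description precedes it below -/
import Mathlib

section
/- Let G be a path-restricted ordered bipartite graph, let v be a vertex of G, and let S be the vertex set of T_r(v). Then every edge of G with both endpoints in S is an edge of T_r(v); consequently the subgraph of G induced by S has exactly |S| − 1 edges. -/
open List

/-- Adjacency relation of the bipartite graph with edge set `E ⊆ U × V`,
on the disjoint union of the two sides. -/
def BipAdj {α β : Type*} (E : Set (α × β)) : (α ⊕ β) → (α ⊕ β) → Prop
  | Sum.inl u, Sum.inr v => (u, v) ∈ E
  | Sum.inr v, Sum.inl u => (u, v) ∈ E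
  | _, _ => False

/-- The `U`-vertices visited by a walk, in order of traversal. -/
def uVerts {α β : Type*} (ws : List (α ⊕ β)) : List α := ws.filterMap Sum.getLeft?

/-- The `V`-vertices visited by a walk, in order of traversal. -/
def vVerts {α β : Type*} (ws : List (α ⊕ β)) : List β := ws.filterMap Sum.getRight?

/-- A (nonempty, simple) path in the bipartite graph with edge set `E`. -/
def IsPathList {α β : Type*} (E : Set (α × β)) (ws : List (α ⊕ β)) : Prop :=
  ws ≠ [] ∧ ws.Chain' (BipAdj E) ∧ ws.Nodup

/-- A forward path: a path whose `U`-vertices and `V`-vertices are both visited in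
strictly increasing order, or both in strictly decreasing order. -/
def IsForwardPath {α β : Type*} [Preorder α] [Preorder β]
    (E : Set (α × β)) (ws : List (α ⊕ β)) : Prop :=
  IsPathList E ws ∧
    (((uVerts ws).Chain' (· < ·) ∧ (vVerts ws).Chain' (· < ·)) ∨
      ((uVerts ws).Chain' (· > ·) ∧ (vVerts ws).Chain' (· > ·)))

/-- The internal (degree-two) vertices of a path: all but the two endpoints. -/
def internalVerts {α β : Type*} (ws : List (α ⊕ β)) : List (α ⊕ β) := (ws.drop 1).dropLast

/-- `x` is a least element of the list `l`. -/
def ListLeast {γ : Type*} [Preorder γ] (l : List γ) (x : γ) : Prop :=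
  x ∈ l ∧ ∀ y ∈ l, x ≤ y

/-- `x` is a greatest element of the list `l`. -/
def ListGreatest {γ : Type*} [Preorder γ] (l : List γ) (x : γ) : Prop :=
  x ∈ l ∧ ∀ y ∈ l, y ≤ x

/-- The forward path `ws` has a back edge: an edge of `G` joining the smallest
`U`-vertex `u_a` of `ws` to a vertex `v_j ∈ [v_c, v_d]` strictly greater than the smallest
internal `V`-vertex of `ws`, or an edge joining the smallest `V`-vertex `v_c` of `ws` to a
vertex `u_i ∈ [u_a, u_b]` strictly greater than the smallest internal `U`-vertex of `ws`. -/
def HasBackEdge {α β : Type*} [Preorder α] [Preorder β]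
    (E : Set (α × β)) (ws : List (α ⊕ β)) : Prop :=
  (∃ ua vc vd vint vj,
      ListLeast (uVerts ws) ua ∧ ListLeast (vVerts ws) vc ∧ ListGreatest (vVerts ws) vd ∧
      ListLeast (vVerts (internalVerts ws)) vint ∧
      (ua, vj) ∈ E ∧ vc ≤ vj ∧ vj ≤ vd ∧ vint < vj) ∨
  (∃ vc ua ub uint ui,
      ListLeast (vVerts ws) vc ∧ ListLeast (uVerts ws) ua ∧ ListGreatest (uVerts ws) ub ∧
      ListLeast (uVerts (internalVerts ws)) uint ∧
      (ui, vc) ∈ E ∧ ua ≤ ui ∧ ui ≤ ub ∧ uint < ui)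

/-- A path-restricted ordered bipartite graph: no forward path has a back edge. -/
def IsPRBG {α β : Type*} [Preorder α] [Preorder β] (E : Set (α × β)) : Prop :=
  ∀ ws : List (α ⊕ β), IsForwardPath E ws → ¬ HasBackEdge E ws

/-- A decreasing forward path: a path whose `U`-vertices and `V`-vertices are both visited in
strictly decreasing order. -/
def IsDecForwardPath {α β : Type*} [Preorder α] [Preorder β]
    (E : Set (α × β)) (ws : List (α ⊕ β)) : Prop :=
  IsPathList E ws ∧ (uVerts ws).Chain' (· > ·) ∧ (vVerts ws).Chain' (· > ·)

/-- The vertex set of `T_r(v)`: the union of all decreasing forward paths originating at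
`v`. -/
def TrVerts {α β : Type*} [Preorder α] [Preorder β] (E : Set (α × β)) (v : α ⊕ β) :
    Set (α ⊕ β) :=
  {x | ∃ ws : List (α ⊕ β), IsDecForwardPath E ws ∧ ws.head? = some v ∧ x ∈ ws}

/-!
Orient the edges of `T_r(v)` away from `v`, and order `α ⊕ β` by the coproduct order, in which two
vertices are comparable exactly when they lie on the same side. The absence of back edges says: if
`p → w` is an arc and `x ≤ v` is a neighbour of `w`, then `x ≤ p`. So an induced edge between `w`
and a vertex `x` on the side of `v` is either the arc `p → w` itself (`x = p`) or extends it
(`x < p`). The same inequality shows that a vertex has at most one parent `p`, hence arcs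
correspond bijectively to the vertices other than `v`.
-/

section Sides

variable {α β : Type*}

theorem BipAdj.symm {E : Set (α × β)} {x y : α ⊕ β} (h : BipAdj E x y) : BipAdj E y x := by
  rcases x with x | x <;> rcases y with y | y <;> exact h

theorem BipAdj.isLeft_eq_not {E : Set (α × β)} {x y : α ⊕ β} (h : BipAdj E x y) :
    x.isLeft = !y.isLeft := by
  rcases x with x | x <;> rcases y with y | y <;> first | rfl | exact h.elim

theorem BipAdj.isLeft_eq_of_common_neighbour {E : Set (α × β)} {x w y : α ⊕ β}
    (hxw : BipAdj E x w) (hyw : BipAdj E y w) : x.isLeft = y.isLeft :=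
  hxw.isLeft_eq_not.trans hyw.isLeft_eq_not.symm

theorem isLeft_eq_of_le [LE α] [LE β] {x y : α ⊕ β} (h : x ≤ y) : x.isLeft = y.isLeft :=
  Bool.eq_iff_iff.2 (Sum.LiftRel.isLeft_congr h)

theorem BipAdj.not_le [LE α] [LE β] {E : Set (α × β)} {x y : α ⊕ β} (h : BipAdj E x y) :
    ¬ x ≤ y := fun hle =>
  Bool.not_ne_self _ (h.isLeft_eq_not.symm.trans (isLeft_eq_of_le hle))

theorem le_total_of_isLeft_eq [LinearOrder α] [LinearOrder β] {x y : α ⊕ β}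
    (h : x.isLeft = y.isLeft) : x ≤ y ∨ y ≤ x := by
  rcases x with x | x <;> rcases y with y | y
  · simpa using le_total x y
  · cases h
  · cases h
  · simpa using le_total x y

end Sides

section Extrema

theorem minimal_of_pairwise_not_le_concat {γ : Type*} [Preorder γ] {l : List γ} {x : γ}
    (h : (l ++ [x]).Pairwise (fun a b => ¬ a ≤ b)) : Minimal (· ∈ l ++ [x]) x := by
  refine ⟨by simp, fun y hy hyx => ?_⟩
  rcases List.mem_append.1 hy with hyl | hyx'
  · exact absurd hyx ((List.pairwise_append.1 h).2.2 y hyl x (by simp))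
  · exact (List.mem_singleton.1 hyx').ge

theorem maximal_of_pairwise_not_le_cons {γ : Type*} [Preorder γ] {l : List γ} {x : γ}
    (h : (x :: l).Pairwise (fun a b => ¬ a ≤ b)) : Maximal (· ∈ x :: l) x := by
  refine ⟨by simp, fun y hy hxy => ?_⟩
  rcases List.mem_cons.1 hy with rfl | hyl
  · exact hxy
  · exact absurd hxy (List.rel_of_pairwise_cons h hyl)

theorem mem_of_mem_internalVerts {α β : Type*} {ws : List (α ⊕ β)} {x : α ⊕ β}
    (hx : x ∈ internalVerts ws) : x ∈ ws :=
  List.mem_of_mem_drop (List.mem_of_mem_dropLast hx)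

variable {α β : Type*} [LinearOrder α] [LinearOrder β] {ws : List (α ⊕ β)}

theorem listLeast_uVerts_iff_minimal {a : α} :
    ListLeast (uVerts ws) a ↔ Minimal (· ∈ ws) (Sum.inl a) := by
  simp [ListLeast, uVerts, minimal_iff_forall_lt, imp_not_comm]

theorem listLeast_vVerts_iff_minimal {b : β} :
    ListLeast (vVerts ws) b ↔ Minimal (· ∈ ws) (Sum.inr b) := by
  simp [ListLeast, vVerts, minimal_iff_forall_lt, imp_not_comm]

theorem listGreatest_uVerts_iff_maximal {a : α} :
    ListGreatest (uVerts ws) a ↔ Maximal (· ∈ ws) (Sum.inl a) := by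
  simp [ListGreatest, uVerts, maximal_iff_forall_gt, imp_not_comm]

theorem listGreatest_vVerts_iff_maximal {b : β} :
    ListGreatest (vVerts ws) b ↔ Maximal (· ∈ ws) (Sum.inr b) := by
  simp [ListGreatest, vVerts, maximal_iff_forall_gt, imp_not_comm]

theorem hasBackEdge_of_minimal_of_maximal {E : Set (α × β)} {w p d x : α ⊕ β}
    (hw : Minimal (· ∈ ws) w) (hp : Minimal (· ∈ ws) p) (hpi : p ∈ internalVerts ws)
    (hd : Maximal (· ∈ ws) d) (hwx : BipAdj E w x) (hpx : p < x) (hxd : x ≤ d) :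
    HasBackEdge E ws := by
  have hi : Minimal (· ∈ internalVerts ws) p := hp.mono (fun _ => mem_of_mem_internalVerts) hpi
  have hp_side := isLeft_eq_of_le hpx.le
  have hd_side := isLeft_eq_of_le hxd
  rcases w with w | w <;> rcases x with x | x <;> try exact hwx.elim
  · rcases p with p | p <;> rcases d with d | d <;> cases hp_side <;> cases hd_side
    exact Or.inl ⟨w, p, d, p, x, listLeast_uVerts_iff_minimal.2 hw,
      listLeast_vVerts_iff_minimal.2 hp, listGreatest_vVerts_iff_maximal.2 hd,
      listLeast_vVerts_iff_minimal.2 hi, hwx, Sum.inr_le_inr_iff.1 hpx.le,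
      Sum.inr_le_inr_iff.1 hxd, Sum.inr_lt_inr_iff.1 hpx⟩
  · rcases p with p | p <;> rcases d with d | d <;> cases hp_side <;> cases hd_side
    exact Or.inr ⟨w, p, d, p, x, listLeast_vVerts_iff_minimal.2 hw,
      listLeast_uVerts_iff_minimal.2 hp, listGreatest_uVerts_iff_maximal.2 hd,
      listLeast_uVerts_iff_minimal.2 hi, hwx, Sum.inl_le_inl_iff.1 hpx.le,
      Sum.inl_le_inl_iff.1 hxd, Sum.inl_lt_inl_iff.1 hpx⟩

end Extrema

section DecreasingPaths

variable {α β : Type*} [Preorder α] [Preorder β] {E : Set (α × β)}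

namespace IsDecForwardPath

theorem isForwardPath {ws : List (α ⊕ β)} (h : IsDecForwardPath E ws) : IsForwardPath E ws :=
  ⟨h.1, Or.inr h.2⟩

theorem isChain {ws : List (α ⊕ β)} (h : IsDecForwardPath E ws) : ws.IsChain (BipAdj E) :=
  h.1.2.1

theorem of_prefix {ws ws' : List (α ⊕ β)} (h : IsDecForwardPath E ws) (hpre : ws' <+: ws)
    (hne : ws' ≠ []) : IsDecForwardPath E ws' :=
  ⟨⟨hne, h.isChain.prefix hpre, h.1.2.2.sublist hpre.sublist⟩,
    h.2.1.prefix (hpre.filterMap _), h.2.2.prefix (hpre.filterMap _)⟩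

theorem adj_last {l : List (α ⊕ β)} {p w : α ⊕ β} (h : IsDecForwardPath E (l ++ [p, w])) :
    BipAdj E p w :=
  List.isChain_pair.1 (List.isChain_append.1 h.isChain).2.1

end IsDecForwardPath

end DecreasingPaths

section DecreasingPathsLinearOrder

variable {α β : Type*} [LinearOrder α] [LinearOrder β] {E : Set (α × β)}

theorem pairwise_not_le_iff_isChain_gt {ws : List (α ⊕ β)} :
    ws.Pairwise (fun x y => ¬ x ≤ y) ↔
      (uVerts ws).IsChain (· > ·) ∧ (vVerts ws).IsChain (· > ·) := by
  simp only [List.isChain_iff_pairwise, uVerts, vVerts, List.pairwise_filterMap,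
    ← List.pairwise_and_iff]
  refine List.Pairwise.iff fun {x y} => ?_
  rcases x with x | x <;> rcases y with y | y <;> simp

theorem isDecForwardPath_iff {ws : List (α ⊕ β)} :
    IsDecForwardPath E ws ↔
      ws ≠ [] ∧ ws.IsChain (BipAdj E) ∧ ws.Pairwise (fun x y => ¬ x ≤ y) := by
  refine ⟨fun ⟨⟨hne, hadj, _⟩, hdec⟩ => ⟨hne, hadj, pairwise_not_le_iff_isChain_gt.2 hdec⟩,
    fun ⟨hne, hadj, hdec⟩ => ⟨⟨hne, hadj, hdec.imp ?_⟩, pairwise_not_le_iff_isChain_gt.1 hdec⟩⟩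
  rintro x _ hxy rfl
  exact hxy le_rfl

namespace IsDecForwardPath

theorem pairwise_not_le {ws : List (α ⊕ β)} (h : IsDecForwardPath E ws) :
    ws.Pairwise (fun x y => ¬ x ≤ y) :=
  (isDecForwardPath_iff.1 h).2.2

theorem minimal_last {l : List (α ⊕ β)} {w : α ⊕ β} (h : IsDecForwardPath E (l ++ [w])) :
    Minimal (· ∈ l ++ [w]) w :=
  minimal_of_pairwise_not_le_concat h.pairwise_not_le

theorem minimal_penultimate {l : List (α ⊕ β)} {p w : α ⊕ β}
    (h : IsDecForwardPath E (l ++ [p, w])) : Minimal (· ∈ l ++ [p, w]) p := by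
  have hinit : IsDecForwardPath E (l ++ [p]) := h.of_prefix (by simp) (by simp)
  refine ⟨by simp, fun y hy hyp => ?_⟩
  rcases (by simpa [or_assoc] using hy : (y ∈ l ∨ y = p) ∨ y = w) with hy_init | rfl
  · exact hinit.minimal_last.2 (by simpa using hy_init) hyp
  · exact absurd hyp h.adj_last.symm.not_le

theorem concat {l : List (α ⊕ β)} {p w x : α ⊕ β} (h : IsDecForwardPath E (l ++ [p, w]))
    (hwx : BipAdj E w x) (hxp : x < p) : IsDecForwardPath E (l ++ [p, w] ++ [x]) := by
  refine isDecForwardPath_iff.2 ⟨by simp, ?_, ?_⟩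
  · exact List.isChain_append.2 ⟨h.isChain, .singleton x, by simpa using hwx⟩
  · refine List.pairwise_append.2 ⟨h.pairwise_not_le, List.pairwise_singleton _ _, ?_⟩
    intro y hy x' hx' hyx
    obtain rfl := List.mem_singleton.1 hx'
    exact (hyx.trans_lt hxp).not_ge (h.minimal_penultimate.2 hy (hyx.trans hxp.le))

end IsDecForwardPath

end DecreasingPathsLinearOrder

/-- The arc `p → w` of `T_r(v)`, that is, an edge oriented away from `v`: some decreasing forward
path from `v` ends with the step from `p` to `w`. Nothing is lost by asking for the last step, as
initial segments of such paths are again such paths. -/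
def IsTrArc {α β : Type*} [Preorder α] [Preorder β] (E : Set (α × β)) (v p w : α ⊕ β) : Prop :=
  ∃ l, IsDecForwardPath E (l ++ [p, w]) ∧ (l ++ [p, w]).head? = some v

/-- The set of arcs of `T_r(v)`, as pairs (source, target); it is compared with the unoriented
edges through `Sym2`. -/
def trArcs {α β : Type*} [Preorder α] [Preorder β] (E : Set (α × β)) (v : α ⊕ β) :
    Set ((α ⊕ β) × (α ⊕ β)) :=
  {a | IsTrArc E v a.1 a.2}

/-- The edge set of the subgraph of `G` induced by the vertex set `S`, each edge being given by
its `U`-end followed by its `V`-end as in `E`. -/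
def inducedEdges {α β : Type*} (E : Set (α × β)) (S : Set (α ⊕ β)) : Set (α × β) :=
  {e ∈ E | Sum.inl e.1 ∈ S ∧ Sum.inr e.2 ∈ S}

section Arcs

variable {α β : Type*} [Preorder α] [Preorder β] {E : Set (α × β)} {v p w x : α ⊕ β}

theorem root_mem_trVerts (E : Set (α × β)) (v : α ⊕ β) : v ∈ TrVerts E v := by
  refine ⟨[v], ⟨⟨by simp, .singleton v, by simp⟩, ?_⟩, rfl, by simp⟩
  rcases v with u | b
  · exact ⟨.singleton u, .nil⟩
  · exact ⟨.nil, .singleton b⟩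

theorem exists_isTrArc_of_mem_trVerts (hx : x ∈ TrVerts E v) (hne : x ≠ v) :
    ∃ p, IsTrArc E v p x := by
  obtain ⟨ws, h, hhead, hmem⟩ := hx
  obtain ⟨init, tail, rfl⟩ := List.append_of_mem hmem
  rcases List.eq_nil_or_concat' init with rfl | ⟨l, p, rfl⟩
  · exact absurd (by simpa using hhead) hne
  · exact ⟨p, l, h.of_prefix ⟨tail, by simp⟩ (by simp), by simpa using hhead⟩

namespace IsTrArc

theorem adj (h : IsTrArc E v p w) : BipAdj E p w :=
  let ⟨_, hpath, _⟩ := h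
  hpath.adj_last

theorem source_mem (h : IsTrArc E v p w) : p ∈ TrVerts E v :=
  let ⟨l, hpath, hhead⟩ := h
  ⟨l ++ [p, w], hpath, hhead, by simp⟩

theorem target_mem (h : IsTrArc E v p w) : w ∈ TrVerts E v :=
  let ⟨l, hpath, hhead⟩ := h
  ⟨l ++ [p, w], hpath, hhead, by simp⟩

theorem target_ne_root (h : IsTrArc E v p w) : w ≠ v := by
  rintro rfl
  obtain ⟨l, hpath, hhead⟩ := h
  have hmem : w ∈ l ++ [p] := List.mem_of_mem_head? (by simpa using hhead)
  have hnodup : (l ++ [p] ++ [w]).Nodup := by simpa using hpath.1.2.2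
  exact List.disjoint_of_nodup_append hnodup hmem (List.mem_singleton_self w)

theorem exists_infix (h : IsTrArc E v p w) :
    ∃ ws, IsDecForwardPath E ws ∧ ws.head? = some v ∧ [p, w] <:+: ws :=
  let ⟨l, hpath, hhead⟩ := h
  ⟨l ++ [p, w], hpath, hhead, (List.suffix_append l [p, w]).isInfix⟩

end IsTrArc

theorem image_snd_trArcs (E : Set (α × β)) (v : α ⊕ β) :
    Prod.snd '' trArcs E v = TrVerts E v \ {v} := by
  ext w
  constructor
  · rintro ⟨⟨p, w⟩, h, rfl⟩
    exact ⟨h.target_mem, h.target_ne_root⟩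
  · rintro ⟨hw, hne⟩
    obtain ⟨p, h⟩ := exists_isTrArc_of_mem_trVerts hw hne
    exact ⟨(p, w), h, rfl⟩

end Arcs

section Tree

variable {α β : Type*} [LinearOrder α] [LinearOrder β] {E : Set (α × β)} {v p w x : α ⊕ β}

theorem le_root_of_mem_trVerts (hx : x ∈ TrVerts E v) (hside : x.isLeft = v.isLeft) : x ≤ v := by
  obtain ⟨ws, h, hhead, hmem⟩ := hx
  obtain ⟨t, rfl⟩ := List.head?_eq_some_iff.1 hhead
  exact (le_total_of_isLeft_eq hside).elim id
    ((maximal_of_pairwise_not_le_cons h.pairwise_not_le).2 hmem)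

namespace IsTrArc

theorem extend (h : IsTrArc E v p w) (hwx : BipAdj E w x) (hxp : x < p) : IsTrArc E v w x := by
  obtain ⟨l, hpath, hhead⟩ := h
  exact ⟨l ++ [p], by simpa using hpath.concat hwx hxp, by simpa using hhead⟩

theorem eq_root_or_exists_isTrArc (h : IsTrArc E v p w) :
    p = v ∨ ∃ q, IsTrArc E v q p ∧ w < q := by
  obtain ⟨l, hpath, hhead⟩ := h
  rcases List.eq_nil_or_concat' l with rfl | ⟨l, q, rfl⟩
  · exact Or.inl (by simpa using hhead)
  have hqp : IsTrArc E v q p :=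
    ⟨l, hpath.of_prefix ⟨[w], by simp⟩ (by simp), by simpa using hhead⟩
  have hqw : ¬ q ≤ w :=
    (List.pairwise_append.1 hpath.pairwise_not_le).2.2 q (by simp) w (by simp)
  have hside : q.isLeft = w.isLeft :=
    hqp.adj.isLeft_eq_of_common_neighbour hpath.adj_last.symm
  exact Or.inr ⟨q, hqp, lt_of_le_not_ge ((le_total_of_isLeft_eq hside).resolve_left hqw) hqw⟩

theorem le_of_adj_of_le_root (hG : IsPRBG E) (h : IsTrArc E v p w) (hwx : BipAdj E w x)
    (hxv : x ≤ v) : x ≤ p := by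
  obtain ⟨_ | ⟨u, t⟩, hpath, hhead⟩ := h
  · rwa [show p = v by simpa using hhead]
  obtain rfl : u = v := by simpa using hhead
  have hside : x.isLeft = p.isLeft := hwx.symm.isLeft_eq_of_common_neighbour hpath.adj_last
  by_contra hxp
  have hpx : p < x := lt_of_le_not_ge ((le_total_of_isLeft_eq hside).resolve_left hxp) hxp
  have hw : Minimal (· ∈ u :: t ++ [p, w]) w := by
    simpa using (show IsDecForwardPath E (u :: t ++ [p] ++ [w]) by simpa using hpath).minimal_last
  have hpi : p ∈ internalVerts (u :: t ++ [p, w]) := by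
    simp [internalVerts]
  exact hG _ hpath.isForwardPath (hasBackEdge_of_minimal_of_maximal hw hpath.minimal_penultimate
    hpi (maximal_of_pairwise_not_le_cons hpath.pairwise_not_le) hwx hpx hxv)

-- If `p` is on the side of `v`, then `p' ≤ v` is a forbidden neighbour of `w` for the arc `p → w`.
-- Otherwise `p' → w → p` is decreasing, and the predecessor `q ≤ v` of `p` is a forbidden
-- neighbour of `p` for the arc `w → p`.
theorem not_source_lt (hG : IsPRBG E) {p' : α ⊕ β} (h : IsTrArc E v p w)
    (h' : IsTrArc E v p' w) : ¬ p < p' := by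
  intro hlt
  have hside : p.isLeft = p'.isLeft := isLeft_eq_of_le hlt.le
  by_cases hroot : p'.isLeft = v.isLeft
  · have hp'v : p' ≤ v := le_root_of_mem_trVerts h'.source_mem hroot
    exact (h.le_of_adj_of_le_root hG h'.adj.symm hp'v).not_gt hlt
  rcases h.eq_root_or_exists_isTrArc with rfl | ⟨q, hqp, hwq⟩
  · exact hroot hside.symm
  have hqv : q ≤ v := by
    refine le_root_of_mem_trVerts hqp.source_mem ?_
    rw [hqp.adj.isLeft_eq_not, hside, Bool.eq_not.2 hroot, Bool.not_not]
  have hwp : IsTrArc E v w p := h'.extend h.adj.symm hlt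
  exact (hwp.le_of_adj_of_le_root hG hqp.adj.symm hqv).not_gt hwq

theorem source_unique (hG : IsPRBG E) {p' : α ⊕ β} (h : IsTrArc E v p w)
    (h' : IsTrArc E v p' w) : p = p' := by
  rcases le_total_of_isLeft_eq (h.adj.isLeft_eq_of_common_neighbour h'.adj) with hle | hle
  · exact eq_of_le_of_not_lt hle (h.not_source_lt hG h')
  · exact (eq_of_le_of_not_lt hle (h'.not_source_lt hG h)).symm

theorem not_reverse (hG : IsPRBG E) (h : IsTrArc E v p w) : ¬ IsTrArc E v w p := by
  intro hwp
  rcases h.eq_root_or_exists_isTrArc with rfl | ⟨q, hqp, hwq⟩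
  · exact hwp.target_ne_root rfl
  · exact hwq.ne (hwp.source_unique hG hqp)

end IsTrArc

theorem isTrArc_or_isTrArc_of_adj_of_isLeft_eq (hG : IsPRBG E) (hxw : BipAdj E x w)
    (hx : x ∈ TrVerts E v) (hw : w ∈ TrVerts E v) (hside : x.isLeft = v.isLeft) :
    IsTrArc E v x w ∨ IsTrArc E v w x := by
  have hwv : w ≠ v := by
    rintro rfl
    exact Bool.not_ne_self _ (hxw.isLeft_eq_not.symm.trans hside)
  obtain ⟨p, hpw⟩ := exists_isTrArc_of_mem_trVerts hw hwv
  have hxp : x ≤ p :=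
    hpw.le_of_adj_of_le_root hG hxw.symm (le_root_of_mem_trVerts hx hside)
  rcases hxp.eq_or_lt with rfl | hlt
  · exact Or.inl hpw
  · exact Or.inr (hpw.extend hxw.symm hlt)

theorem isTrArc_or_isTrArc_of_adj (hG : IsPRBG E) (hxw : BipAdj E x w)
    (hx : x ∈ TrVerts E v) (hw : w ∈ TrVerts E v) : IsTrArc E v x w ∨ IsTrArc E v w x := by
  by_cases hside : x.isLeft = v.isLeft
  · exact isTrArc_or_isTrArc_of_adj_of_isLeft_eq hG hxw hx hw hside
  · have hside' : w.isLeft = v.isLeft := by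
      rw [hxw.symm.isLeft_eq_not, Bool.eq_not.2 hside, Bool.not_not]
    exact (isTrArc_or_isTrArc_of_adj_of_isLeft_eq hG hxw.symm hw hx hside').symm

theorem injOn_snd_trArcs (hG : IsPRBG E) (v : α ⊕ β) : Set.InjOn Prod.snd (trArcs E v) := by
  rintro ⟨p, w⟩ h ⟨p', _⟩ h' rfl
  exact Prod.ext (h.source_unique hG h') rfl

theorem image_sym2_inducedEdges_trVerts (hG : IsPRBG E) (v : α ⊕ β) :
    (fun e => s(Sum.inl e.1, Sum.inr e.2)) '' inducedEdges E (TrVerts E v) =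
      (fun a => s(a.1, a.2)) '' trArcs E v := by
  ext z
  constructor
  · rintro ⟨⟨u, b⟩, ⟨hE, hu, hb⟩, rfl⟩
    rcases isTrArc_or_isTrArc_of_adj (x := Sum.inl u) (w := Sum.inr b) hG hE hu hb with h | h
    · exact ⟨(Sum.inl u, Sum.inr b), h, rfl⟩
    · exact ⟨(Sum.inr b, Sum.inl u), h, Sym2.eq_swap⟩
  · rintro ⟨⟨p | p, w | w⟩, h, rfl⟩
    · exact h.adj.elim
    · exact ⟨(p, w), ⟨h.adj, h.source_mem, h.target_mem⟩, rfl⟩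
    · exact ⟨(w, p), ⟨h.adj, h.target_mem, h.source_mem⟩, Sym2.eq_swap⟩
    · exact h.adj.elim

theorem injOn_sym2_trArcs (hG : IsPRBG E) (v : α ⊕ β) :
    Set.InjOn (fun a => s(a.1, a.2)) (trArcs E v) := by
  intro a ha a' ha' h
  rcases Sym2.mk_eq_mk_iff.1 h with rfl | rfl
  · rfl
  · exact absurd ha (IsTrArc.not_reverse hG ha')

theorem encard_inducedEdges_trVerts_add_one (hG : IsPRBG E) (v : α ⊕ β) :
    (inducedEdges E (TrVerts E v)).encard + 1 = (TrVerts E v).encard := by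
  have hinj : Function.Injective (fun e : α × β => s(Sum.inl e.1, Sum.inr e.2)) := by
    rintro ⟨u, b⟩ ⟨u', b'⟩ h
    simpa using h
  have hedges : (inducedEdges E (TrVerts E v)).encard = (trArcs E v).encard := by
    rw [← hinj.encard_image, image_sym2_inducedEdges_trVerts hG,
      (injOn_sym2_trArcs hG v).encard_image]
  have harcs : (trArcs E v).encard = (TrVerts E v \ {v}).encard := by
    rw [← image_snd_trArcs, (injOn_snd_trArcs hG v).encard_image]
  rw [hedges, harcs, Set.encard_sdiff_singleton_add_one (root_mem_trVerts E v)]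

end Tree

theorem prbg_tree_induced_edges_general {α β : Type*} [LinearOrder α] [LinearOrder β]
    (E : Set (α × β)) (hG : IsPRBG E) (v : α ⊕ β) :
    (∀ u b, (u, b) ∈ E → Sum.inl u ∈ TrVerts E v → Sum.inr b ∈ TrVerts E v →
      ∃ ws : List (α ⊕ β), IsDecForwardPath E ws ∧ ws.head? = some v ∧
        ([Sum.inl u, Sum.inr b] <:+: ws ∨ [Sum.inr b, Sum.inl u] <:+: ws)) ∧
    (inducedEdges E (TrVerts E v)).encard + 1 = (TrVerts E v).encard := by
  refine ⟨fun u b hE hu hb => ?_, encard_inducedEdges_trVerts_add_one hG v⟩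
  rcases isTrArc_or_isTrArc_of_adj (x := Sum.inl u) (w := Sum.inr b) hG hE hu hb with h | h
  · obtain ⟨ws, hpath, hhead, hinfix⟩ := h.exists_infix
    exact ⟨ws, hpath, hhead, Or.inl hinfix⟩
  · obtain ⟨ws, hpath, hhead, hinfix⟩ := h.exists_infix
    exact ⟨ws, hpath, hhead, Or.inr hinfix⟩

/-- Let `G` be a path-restricted ordered bipartite graph, `v` a vertex, and `S` the vertex
set of `T_r(v)`.  Then every edge of `G` with both endpoints in `S` is an edge of `T_r(v)`
(i.e. a consecutive pair on some decreasing forward path from `v`); consequently the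
subgraph of `G` induced by `S` has exactly `|S| − 1` edges. -/
theorem prbg_tree_induced_edges {α β : Type*} [LinearOrder α] [LinearOrder β]
    [Fintype α] [Fintype β] (E : Set (α × β)) (hG : IsPRBG E) (v : α ⊕ β) :
    (∀ u b, (u, b) ∈ E → Sum.inl u ∈ TrVerts E v → Sum.inr b ∈ TrVerts E v →
      ∃ ws : List (α ⊕ β), IsDecForwardPath E ws ∧ ws.head? = some v ∧
        ([Sum.inl u, Sum.inr b] <:+: ws ∨ [Sum.inr b, Sum.inl u] <:+: ws)) ∧
    {e ∈ E | Sum.inl e.1 ∈ TrVerts E v ∧ Sum.inr e.2 ∈ TrVerts E v}.ncard =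
      (TrVerts E v).ncard - 1 := by
  obtain ⟨hedges, hcard⟩ := prbg_tree_induced_edges_general E hG v
  simp only [← (Set.toFinite _).cast_ncard_eq] at hcard
  exact ⟨hedges, Nat.eq_sub_of_add_eq (mod_cast hcard)⟩
end

section
/- Let G = (U, V, E) be a path-restricted ordered bipartite graph and let v ∈ V. Let P_1 and P_2 be increasing forward paths originating at v whose first edges go to distinct vertices of U. If u_i ∈ U and v_i ∈ V are consecutive vertices on P_1 (the path traversing u_i and then v_i) and u_j ∈ U and v_j ∈ V are consecutive vertices on P_2, then v_i < v_j implies u_j < u_i. In particular, the ranges of any two increasing forward paths in T_l(v) are disjoint apart from the common origin v. -/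
open List

/-- An increasing forward path: a path whose `U`-vertices and `V`-vertices are both visited in
strictly increasing order. -/
def IsIncForwardPath {α β : Type*} [Preorder α] [Preorder β]
    (E : Set (α × β)) (ws : List (α ⊕ β)) : Prop :=
  IsPathList E ws ∧ (uVerts ws).Chain' (· < ·) ∧ (vVerts ws).Chain' (· < ·)

/-!
Let `P = x, y, …` be an increasing forward path in a PRBG. A neighbour of its origin `x` that is
larger than `y` lies beyond all vertices of `P` on its side, since otherwise it would give a back
edge to `P`.

Suppose that two increasing forward paths `P₁ = v, u₁, w, …` and `P₂ = v, u₂, …` satisfy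
`u₁ < u₂`. As `u₂` is a neighbour of `v`, all `U`-vertices of `P₁` are below `u₂`. The path
`u₁, v, u₂, …` obtained by prepending `u₁` to `P₂` is again increasing and `w` is a neighbour of
`u₁`, so all `V`-vertices of `P₂` are below `w`. Hence the two ranges are separated on both sides,
in opposite directions.
-/

section Lists

variable {γ : Type*}

lemma exists_eq_cons_cons {l : List γ} {x y : γ} (hx : l.head? = some x) (hy : l[1]? = some y) :
    ∃ t, l = x :: y :: t := by
  obtain ⟨s, rfl⟩ := List.head?_eq_some_iff.1 hx
  obtain ⟨t, rfl⟩ := List.head?_eq_some_iff.1 (List.head?_eq_getElem?.trans hy)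
  exact ⟨t, rfl⟩

lemma mem_tail_of_pair_infix {l : List γ} {x y : γ} (h : [x, y] <:+: l) : y ∈ l.tail := by
  obtain ⟨s, t, rfl⟩ := h
  cases s <;> simp

lemma listLeast_cons_of_isChain [Preorder γ] {x : γ} {l : List γ} (h : (x :: l).IsChain (· < ·)) :
    ListLeast (x :: l) x :=
  ⟨List.mem_cons_self, List.forall_mem_cons.2
    ⟨le_rfl, fun _ hy => (List.rel_of_pairwise_cons h.pairwise hy).le⟩⟩

lemma exists_listGreatest [LinearOrder γ] {l : List γ} (hl : l ≠ []) : ∃ m, ListGreatest l m :=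
  ⟨l.max hl, List.max_mem hl, fun _ hy => List.le_max_of_mem hy⟩

end Lists

section Vertices

variable {α β : Type*} {ws : List (α ⊕ β)}

lemma mem_uVerts {u : α} : u ∈ uVerts ws ↔ Sum.inl u ∈ ws := by
  simp [uVerts]

lemma mem_vVerts {v : β} : v ∈ vVerts ws ↔ Sum.inr v ∈ ws := by
  simp [vVerts]

end Vertices

namespace IsIncForwardPath

variable {α β : Type*} [Preorder α] [Preorder β] {E : Set (α × β)} {v : β} {u : α}
  {L : List (α ⊕ β)}

lemma isForwardPath {ws : List (α ⊕ β)} (h : IsIncForwardPath E ws) : IsForwardPath E ws :=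
  ⟨h.1, Or.inl h.2⟩

lemma first_edge_mem (h : IsIncForwardPath E (Sum.inr v :: Sum.inl u :: L)) : (u, v) ∈ E :=
  (List.isChain_cons_cons.1 h.1.2.1).1

lemma listLeast_uVerts (h : IsIncForwardPath E (Sum.inr v :: Sum.inl u :: L)) :
    ListLeast (uVerts (Sum.inr v :: Sum.inl u :: L)) u :=
  listLeast_cons_of_isChain h.2.1

lemma exists_neighbor_le (h : IsIncForwardPath E (Sum.inr v :: Sum.inl u :: L)) {x : β}
    (hx : x ∈ vVerts L) : ∃ w, (u, w) ∈ E ∧ v < w ∧ w ≤ x := by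
  obtain ⟨⟨-, hadj, -⟩, -, hV⟩ := h
  match L with
  | [] => simp [vVerts] at hx
  | Sum.inl _ :: _ => exact (List.isChain_cons_cons.1 (List.isChain_cons_cons.1 hadj).2).1.elim
  | Sum.inr w :: L' =>
    have huw : (u, w) ∈ E := (List.isChain_cons_cons.1 (List.isChain_cons_cons.1 hadj).2).1
    obtain ⟨hvw, hw⟩ : v < w ∧ (w :: vVerts L').IsChain (· < ·) := List.isChain_cons_cons.1 hV
    exact ⟨w, huw, hvw, (listLeast_cons_of_isChain hw).2 x hx⟩

lemma cons_inl {a : α} (h : IsIncForwardPath E (Sum.inr v :: Sum.inl u :: L))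
    (hav : (a, v) ∈ E) (hau : a < u) :
    IsIncForwardPath E (Sum.inl a :: Sum.inr v :: Sum.inl u :: L) := by
  have ha : Sum.inl a ∉ (Sum.inr v :: Sum.inl u :: L : List (α ⊕ β)) := fun hmem =>
    hau.not_ge (h.listLeast_uVerts.2 a (mem_uVerts.2 hmem))
  obtain ⟨⟨-, hadj, hnodup⟩, hU, hV⟩ := h
  exact ⟨⟨List.cons_ne_nil _ _, List.isChain_cons_cons.2 ⟨hav, hadj⟩,
    List.nodup_cons.2 ⟨ha, hnodup⟩⟩, List.isChain_cons_cons.2 ⟨hau, hU⟩, hV⟩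

end IsIncForwardPath

namespace IsPRBG

variable {α β : Type*} [LinearOrder α] [LinearOrder β] {E : Set (α × β)}

lemma uVerts_lt_of_origin_edge (hG : IsPRBG E) {v : β} {u a : α} {L : List (α ⊕ β)}
    (h : IsIncForwardPath E (Sum.inr v :: Sum.inl u :: L)) (hav : (a, v) ∈ E) (hua : u < a) :
    ∀ x ∈ uVerts (Sum.inr v :: Sum.inl u :: L), x < a := by
  intro x hx
  by_contra! hax
  match L with
  | [] => exact hua.not_ge (hax.trans_eq (List.mem_singleton.1 hx))
  | z :: L' =>
    obtain ⟨m, hm⟩ := exists_listGreatest (List.ne_nil_of_mem hx)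
    have hint : ListLeast (uVerts (internalVerts (Sum.inr v :: Sum.inl u :: z :: L'))) u :=
      listLeast_cons_of_isChain
        (h.2.1.sublist (((List.dropLast_sublist (z :: L')).filterMap _).cons_cons u))
    exact hG _ h.isForwardPath (Or.inr ⟨v, u, m, u, a, listLeast_cons_of_isChain h.2.2,
      listLeast_cons_of_isChain h.2.1, hm, hint, hav, hua.le, hax.trans (hm.2 x hx), hua⟩)

lemma vVerts_lt_of_origin_edge (hG : IsPRBG E) {u : α} {v b : β} {L : List (α ⊕ β)}
    (h : IsIncForwardPath E (Sum.inl u :: Sum.inr v :: L)) (hub : (u, b) ∈ E) (hvb : v < b) :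
    ∀ x ∈ vVerts (Sum.inl u :: Sum.inr v :: L), x < b := by
  intro x hx
  by_contra! hbx
  match L with
  | [] => exact hvb.not_ge (hbx.trans_eq (List.mem_singleton.1 hx))
  | z :: L' =>
    obtain ⟨m, hm⟩ := exists_listGreatest (List.ne_nil_of_mem hx)
    have hint : ListLeast (vVerts (internalVerts (Sum.inl u :: Sum.inr v :: z :: L'))) v :=
      listLeast_cons_of_isChain
        (h.2.2.sublist (((List.dropLast_sublist (z :: L')).filterMap _).cons_cons v))
    exact hG _ h.isForwardPath (Or.inl ⟨u, v, m, v, b, listLeast_cons_of_isChain h.2.1,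
      listLeast_cons_of_isChain h.2.2, hm, hint, hub, hvb.le, hbx.trans (hm.2 x hx), hvb⟩)

variable {v : β} {u₁ u₂ : α} {L₁ L₂ : List (α ⊕ β)}

lemma uVerts_lt_uVerts (hG : IsPRBG E)
    (h₁ : IsIncForwardPath E (Sum.inr v :: Sum.inl u₁ :: L₁))
    (h₂ : IsIncForwardPath E (Sum.inr v :: Sum.inl u₂ :: L₂)) (hlt : u₁ < u₂) {x y : α}
    (hx : x ∈ uVerts (Sum.inr v :: Sum.inl u₁ :: L₁))
    (hy : y ∈ uVerts (Sum.inr v :: Sum.inl u₂ :: L₂)) : x < y :=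
  calc
    x < u₂ := hG.uVerts_lt_of_origin_edge h₁ h₂.first_edge_mem hlt x hx
    _ ≤ y := h₂.listLeast_uVerts.2 y hy

lemma vVerts_lt_vVerts (hG : IsPRBG E)
    (h₁ : IsIncForwardPath E (Sum.inr v :: Sum.inl u₁ :: L₁))
    (h₂ : IsIncForwardPath E (Sum.inr v :: Sum.inl u₂ :: L₂)) (hlt : u₁ < u₂) {x y : β}
    (hx : x ∈ vVerts L₁) (hy : y ∈ vVerts (Sum.inr v :: Sum.inl u₂ :: L₂)) : y < x := by
  obtain ⟨w, hu₁w, hvw, hwx⟩ := h₁.exists_neighbor_le hx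
  have hpath := h₂.cons_inl h₁.first_edge_mem hlt
  exact (hG.vVerts_lt_of_origin_edge hpath hu₁w hvw y hy).trans_le hwx

end IsPRBG

theorem prbg_tl_ranges_disjoint_general {α β : Type*} [LinearOrder α] [LinearOrder β]
    {E : Set (α × β)} (hG : IsPRBG E) {v : β} {P₁ P₂ : List (α ⊕ β)}
    (h₁ : IsIncForwardPath E P₁) (h₂ : IsIncForwardPath E P₂)
    (hv₁ : P₁.head? = some (Sum.inr v)) (hv₂ : P₂.head? = some (Sum.inr v))
    {u₁ u₂ : α} (hu₁ : P₁[1]? = some (Sum.inl u₁)) (hu₂ : P₂[1]? = some (Sum.inl u₂))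
    (hne : u₁ ≠ u₂) {ui uj : α} {vi vj : β}
    (hui : ui ∈ uVerts P₁) (hvi : vi ∈ vVerts P₁.tail) (huj : uj ∈ uVerts P₂)
    (hvj : vj ∈ vVerts P₂) (hlt : vi < vj) : uj < ui := by
  obtain ⟨L₁, rfl⟩ := exists_eq_cons_cons hv₁ hu₁
  obtain ⟨L₂, rfl⟩ := exists_eq_cons_cons hv₂ hu₂
  rcases hne.lt_or_gt with hu | hu
  · exact absurd hlt (hG.vVerts_lt_vVerts h₁ h₂ hu hvi hvj).not_gt
  · exact hG.uVerts_lt_uVerts h₂ h₁ hu huj hui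

/-- Let `G = (U, V, E)` be a path-restricted ordered bipartite graph, `v ∈ V`, and let `P₁`,
`P₂` be increasing forward paths originating at `v` whose first edges go to distinct
vertices of `U`.  If `uᵢ ∈ U` and `vᵢ ∈ V` are consecutive on `P₁` (traversed in this
order) and `uⱼ ∈ U`, `vⱼ ∈ V` are consecutive on `P₂`, then `vᵢ < vⱼ` implies `uⱼ < uᵢ`;
in particular the ranges of any two increasing forward paths in `T_l(v)` are disjoint apart
from the common origin `v`. -/
theorem prbg_tl_ranges_disjoint {α β : Type*} [LinearOrder α] [LinearOrder β]
    (E : Set (α × β)) (hG : IsPRBG E) (v : β)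
    (P₁ P₂ : List (α ⊕ β)) (h₁ : IsIncForwardPath E P₁) (h₂ : IsIncForwardPath E P₂)
    (hv₁ : P₁.head? = some (Sum.inr v)) (hv₂ : P₂.head? = some (Sum.inr v))
    (u₁ u₂ : α) (hu₁ : P₁[1]? = some (Sum.inl u₁)) (hu₂ : P₂[1]? = some (Sum.inl u₂))
    (hne : u₁ ≠ u₂) :
    ∀ (ui uj : α) (vi vj : β),
      [Sum.inl ui, Sum.inr vi] <:+: P₁ → [Sum.inl uj, Sum.inr vj] <:+: P₂ →
      vi < vj → uj < ui := by
  intro ui uj vi vj hi hj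
  exact prbg_tl_ranges_disjoint_general hG h₁ h₂ hv₁ hv₂ hu₁ hu₂ hne
    (mem_uVerts.2 (hi.subset (by simp))) (mem_vVerts.2 (mem_tail_of_pair_infix hi))
    (mem_uVerts.2 (hj.subset (by simp))) (mem_vVerts.2 (hj.subset (by simp)))
end

section
/- (Crossing lemma) Let G = (U, V, E) be a path-restricted ordered bipartite graph, and suppose U = U_1 ∪ U_2 and V = V_1 ∪ V_2 are partitions such that every vertex of U_1 is greater than every vertex of U_2 and every vertex of V_1 is greater than every vertex of V_2. (1) If every vertex of U_1 has at least one neighbor in V_1, then the number of edges of G with one endpoint in U_1 and the other in V_2 is at most |U_1| + |V_2|. (2) If every vertex of V_1 has at least one neighbor in U_1, then the number of edges of G with one endpoint in V_1 and the other in U_2 is at most |V_1| + |U_2|. -/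
open List

/-!
Suppose `U₁` and `V₂` are joined by edges `(u, v)`, `(u', v)`, `(u, v')` with `u < u'` and `v < v'`.
A neighbour `w ∈ V₁` of `u'` lies above `v'`, so `u, v, u', w` is a forward path with back edge
`(u, v')`. Hence, in a path-restricted graph, each edge between `U₁` and `V₂` is the greatest one at
its `U`-endpoint or at its `V`-endpoint; there are at most `|U₁|` edges of the first kind and at
most `|V₂|` of the second. Part (2) is part (1) for the graph with its sides exchanged.
-/

section Counting

variable {α β : Type*}

lemma encard_greatest_in_row_le [PartialOrder β] (S : Set (α × β)) :
    {e : α × β | IsGreatest {v | (e.1, v) ∈ S} e.2}.encard ≤ (Prod.fst '' S).encard := by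
  refine Set.encard_le_encard_of_injOn (f := Prod.fst)
    (fun e he ↦ Set.mem_image_of_mem _ he.1) ?_
  rintro ⟨u, v⟩ hv ⟨_, v'⟩ hv' rfl
  exact congrArg (Prod.mk u) (IsGreatest.unique hv hv')

lemma encard_greatest_in_column_le [PartialOrder α] (S : Set (α × β)) :
    {e : α × β | IsGreatest {u | (u, e.2) ∈ S} e.1}.encard ≤ (Prod.snd '' S).encard := by
  refine Set.encard_le_encard_of_injOn (f := Prod.snd)
    (fun e he ↦ Set.mem_image_of_mem _ he.1) ?_
  rintro ⟨u, v⟩ hu ⟨u', _⟩ hu' rfl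
  exact congrArg (Prod.mk · v) (IsGreatest.unique hu hu')

lemma encard_le_of_no_corner [LinearOrder α] [LinearOrder β] {S : Set (α × β)}
    (hS : ∀ ⦃u u' v v'⦄, u < u' → v < v' → (u, v) ∈ S → (u', v) ∈ S → (u, v') ∉ S) :
    S.encard ≤ (Prod.fst '' S).encard + (Prod.snd '' S).encard := by
  have hcover : S ⊆ {e | IsGreatest {v | (e.1, v) ∈ S} e.2} ∪
      {e | IsGreatest {u | (u, e.2) ∈ S} e.1} := by
    rintro ⟨u, v⟩ he
    by_cases hrow : ∀ v', (u, v') ∈ S → v' ≤ v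
    · exact Or.inl ⟨he, hrow⟩
    · push Not at hrow
      obtain ⟨v', hv', hlt⟩ := hrow
      exact Or.inr ⟨he, fun u' hu' ↦ not_lt.1 fun huu' ↦ hS huu' hlt he hu' hv'⟩
  exact (Set.encard_le_encard hcover).trans <| (Set.encard_union_le _ _).trans <|
    add_le_add (encard_greatest_in_row_le S) (encard_greatest_in_column_le S)

lemma ncard_le_card_add_card_of_encard_le {γ : Type*} {S : Set γ} {A : Finset α} {B : Finset β}
    (h : S.encard ≤ (A : Set α).encard + (B : Set β).encard) : S.ncard ≤ A.card + B.card := by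
  simp only [Set.encard_coe_eq_coe_finsetCard, ← Nat.cast_add] at h
  exact (Set.encard_le_coe_iff_finite_ncard_le.1 h).2

end Counting

section Swap

variable {α β : Type*} {E : Set (α × β)}

lemma uVerts_map_swap (ws : List (α ⊕ β)) : uVerts (ws.map Sum.swap) = vVerts ws := by
  simp only [uVerts, vVerts, List.filterMap_map, Function.comp_def, Sum.getLeft?_swap]

lemma vVerts_map_swap (ws : List (α ⊕ β)) : vVerts (ws.map Sum.swap) = uVerts ws := by
  simp only [uVerts, vVerts, List.filterMap_map, Function.comp_def, Sum.getRight?_swap]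

lemma internalVerts_map_swap (ws : List (α ⊕ β)) :
    internalVerts (ws.map Sum.swap) = (internalVerts ws).map Sum.swap := by
  simp only [internalVerts, List.map_drop, List.map_dropLast]

lemma bipAdj_swap_iff (x y : β ⊕ α) :
    BipAdj E x.swap y.swap ↔ BipAdj (Prod.swap ⁻¹' E) x y := by
  cases x <;> cases y <;> rfl

lemma IsPathList.map_swap {ws : List (β ⊕ α)} (h : IsPathList (Prod.swap ⁻¹' E) ws) :
    IsPathList E (ws.map Sum.swap) :=
  ⟨by simpa using h.1, (List.isChain_map _).2 (h.2.1.imp fun _ _ ↦ (bipAdj_swap_iff _ _).2),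
    h.2.2.map Sum.swap_leftInverse.injective⟩

variable [Preorder α] [Preorder β]

lemma IsForwardPath.map_swap {ws : List (β ⊕ α)} (h : IsForwardPath (Prod.swap ⁻¹' E) ws) :
    IsForwardPath E (ws.map Sum.swap) := by
  refine ⟨h.1.map_swap, ?_⟩
  rw [uVerts_map_swap, vVerts_map_swap]
  exact h.2.imp And.symm And.symm

lemma HasBackEdge.map_swap {ws : List (β ⊕ α)} (h : HasBackEdge (Prod.swap ⁻¹' E) ws) :
    HasBackEdge E (ws.map Sum.swap) := by
  simp only [HasBackEdge, internalVerts_map_swap, uVerts_map_swap, vVerts_map_swap]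
  exact h.symm

lemma IsPRBG.swap (hG : IsPRBG E) : IsPRBG (Prod.swap ⁻¹' E) :=
  fun _ hws hback ↦ hG _ hws.map_swap hback.map_swap

end Swap

lemma isForwardPath_zigzag {α β : Type*} [Preorder α] [Preorder β] {E : Set (α × β)}
    {u u' : α} {v w : β} (huu' : u < u') (hvw : v < w)
    (huv : (u, v) ∈ E) (hu'v : (u', v) ∈ E) (hu'w : (u', w) ∈ E) :
    IsForwardPath E [.inl u, .inr v, .inl u', .inr w] := by
  have hedges : List.IsChain (BipAdj E) [.inl u, .inr v, .inl u', .inr w] := by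
    simp [BipAdj, huv, hu'v, hu'w]
  have hnodup : List.Nodup (α := α ⊕ β) [.inl u, .inr v, .inl u', .inr w] := by
    simp [huu'.ne, hvw.ne]
  exact ⟨⟨List.cons_ne_nil _ _, hedges, hnodup⟩,
    Or.inl ⟨List.isChain_pair.2 huu', List.isChain_pair.2 hvw⟩⟩

namespace IsPRBG

variable {α β : Type*} {E : Set (α × β)}

lemma notMem_of_zigzag [Preorder α] [Preorder β] (hG : IsPRBG E) {u u' : α} {v v' w : β}
    (huu' : u < u') (hvv' : v < v') (hv'w : v' ≤ w)
    (huv : (u, v) ∈ E) (hu'v : (u', v) ∈ E) (hu'w : (u', w) ∈ E) : (u, v') ∉ E := by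
  intro huv'
  have hvw : v < w := hvv'.trans_le hv'w
  have hback : HasBackEdge E [.inl u, .inr v, .inl u', .inr w] := by
    refine Or.inl ⟨u, v, w, v, v', ?_⟩
    simp [ListLeast, ListGreatest, internalVerts, uVerts, vVerts, huu'.le, hvw.le, huv', hvv',
      hvv'.le, hv'w]
  exact hG _ (isForwardPath_zigzag huu' hvw huv hu'v hu'w) hback

variable [LinearOrder α] [LinearOrder β]

theorem encard_edges_le_of_forall_left (hG : IsPRBG E) {U : Set α} {V : Set β}
    (hU : ∀ u ∈ U, ∃ w ∈ upperBounds V, (u, w) ∈ E) :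
    {e ∈ E | e.1 ∈ U ∧ e.2 ∈ V}.encard ≤ U.encard + V.encard := by
  refine (encard_le_of_no_corner ?_).trans (add_le_add ?_ ?_)
  · rintro u u' v v' huu' hvv' ⟨huv, -, -⟩ ⟨hu'v, hu', -⟩ ⟨huv', -, hv'⟩
    obtain ⟨w, hw, hu'w⟩ := hU u' hu'
    exact hG.notMem_of_zigzag huu' hvv' (hw hv') huv hu'v hu'w huv'
  · exact Set.encard_le_encard (Set.image_subset_iff.2 fun _ he ↦ he.2.1)
  · exact Set.encard_le_encard (Set.image_subset_iff.2 fun _ he ↦ he.2.2)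

theorem encard_edges_le_of_forall_right (hG : IsPRBG E) {U : Set α} {V : Set β}
    (hV : ∀ v ∈ V, ∃ w ∈ upperBounds U, (w, v) ∈ E) :
    {e ∈ E | e.1 ∈ U ∧ e.2 ∈ V}.encard ≤ V.encard + U.encard := by
  have hswap : Prod.swap ⁻¹' {e ∈ E | e.1 ∈ U ∧ e.2 ∈ V} =
      {e ∈ Prod.swap ⁻¹' E | e.1 ∈ V ∧ e.2 ∈ U} :=
    Set.ext fun _ ↦ and_congr_right fun _ ↦ and_comm
  rw [← Set.encard_preimage_of_bijective Prod.swap_bijective, hswap]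
  exact hG.swap.encard_edges_le_of_forall_left hV

end IsPRBG

theorem prbg_crossing_lemma_general {α β : Type*} [LinearOrder α] [LinearOrder β]
    (E : Set (α × β)) (hG : IsPRBG E) (U₁ U₂ : Set α) (V₁ V₂ : Set β)
    (hU : ∀ u₁ ∈ U₁, ∀ u₂ ∈ U₂, u₂ ≤ u₁) (hV : ∀ v₁ ∈ V₁, ∀ v₂ ∈ V₂, v₂ ≤ v₁) :
    ((∀ u ∈ U₁, ∃ v ∈ V₁, (u, v) ∈ E) →
      {e ∈ E | e.1 ∈ U₁ ∧ e.2 ∈ V₂}.encard ≤ U₁.encard + V₂.encard) ∧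
    ((∀ v ∈ V₁, ∃ u ∈ U₁, (u, v) ∈ E) →
      {e ∈ E | e.1 ∈ U₂ ∧ e.2 ∈ V₁}.encard ≤ V₁.encard + U₂.encard) := by
  constructor
  · intro hneighbor
    exact hG.encard_edges_le_of_forall_left fun u hu ↦
      (hneighbor u hu).imp fun v ↦ And.imp_left (hV v)
  · intro hneighbor
    exact hG.encard_edges_le_of_forall_right fun v hv ↦
      (hneighbor v hv).imp fun u ↦ And.imp_left (hU u)

/-- (Crossing lemma) Let `G = (U, V, E)` be a path-restricted ordered bipartite graph and
let `U = U₁ ∪ U₂`, `V = V₁ ∪ V₂` be partitions with every vertex of `U₁` greater than every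
vertex of `U₂` and every vertex of `V₁` greater than every vertex of `V₂`.
(1) If every vertex of `U₁` has a neighbour in `V₁`, then at most `|U₁| + |V₂|` edges join
`U₁` to `V₂`.  (2) If every vertex of `V₁` has a neighbour in `U₁`, then at most
`|V₁| + |U₂|` edges join `V₁` to `U₂`. -/
theorem prbg_crossing_lemma {α β : Type*} [LinearOrder α] [LinearOrder β]
    [Fintype α] [Fintype β] (E : Set (α × β)) (hG : IsPRBG E)
    (U₁ U₂ : Finset α) (V₁ V₂ : Finset β)
    (hUcover : U₁ ∪ U₂ = Finset.univ) (hUdisj : Disjoint U₁ U₂)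
    (hVcover : V₁ ∪ V₂ = Finset.univ) (hVdisj : Disjoint V₁ V₂)
    (hUlt : ∀ u₁ ∈ U₁, ∀ u₂ ∈ U₂, u₂ < u₁)
    (hVlt : ∀ v₁ ∈ V₁, ∀ v₂ ∈ V₂, v₂ < v₁) :
    ((∀ u ∈ U₁, ∃ v ∈ V₁, (u, v) ∈ E) →
      {e ∈ E | e.1 ∈ U₁ ∧ e.2 ∈ V₂}.ncard ≤ U₁.card + V₂.card) ∧
    ((∀ v ∈ V₁, ∃ u ∈ U₁, (u, v) ∈ E) →
      {e ∈ E | e.1 ∈ U₂ ∧ e.2 ∈ V₁}.ncard ≤ V₁.card + U₂.card) := by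
  have h := prbg_crossing_lemma_general E hG U₁ U₂ V₁ V₂
    (fun u₁ h₁ u₂ h₂ ↦ (hUlt u₁ h₁ u₂ h₂).le) (fun v₁ h₁ v₂ h₂ ↦ (hVlt v₁ h₁ v₂ h₂).le)
  exact ⟨(ncard_le_card_add_card_of_encard_le <| h.1 ·),
    (ncard_le_card_add_card_of_encard_le <| h.2 ·)⟩
end
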